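/- arXiv:1501.04513 — 6 statements merged into one kernel-verified Lean document; each statement's English description precedes it below -/
import Mathlib

section
/- If X and Y are Borel subsets of ℝ^N, then their Minkowski sum X + Y := {x + y : x ∈ X, y ∈ Y} (with X + Y := ∅ if X = ∅ or Y = ∅) is Lebesgue measurable. -/
open MeasureTheory Filter Set
open scoped ENNReal NNReal Pointwise

noncomputable section

/-- `ℝ^N` with the Euclidean structure and Lebesgue measure. -/
abbrev ES (N : ℕ) := EuclideanSpace ℝ (Fin N)

variable {N : ℕ}

/-- The operation `(f ⊼ g)(x) = sup_y min (f (x - y)) (g y)` for extended-real valued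
functions. -/
def supMinE (f g : ES N → EReal) (x : ES N) : EReal := ⨆ y, min (f (x - y)) (g y)

/-- The operation `(f ⊻ g)(x) = inf_y max (f (x - y)) (g y)` for extended-real valued
functions. -/
def infMaxE (f g : ES N → EReal) (x : ES N) : EReal := ⨅ y, max (f (x - y)) (g y)

/-- The infimal convolution `(f □ g)(x) = inf_y (f (x - y) + g y)`. -/
def infConvE (f g : ES N → EReal) (x : ES N) : EReal := ⨅ y, (f (x - y) + g y)

/-- The operation `(f ⊼ g)(x) = sup_y min (f (x - y)) (g y)` for `[0,∞]`-valued functions. -/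
def supMin (f g : ES N → ℝ≥0∞) (x : ES N) : ℝ≥0∞ := ⨆ y, min (f (x - y)) (g y)

/-- A Young function: a nonconstant, nondecreasing, convex, left-continuous
`φ : [0,∞] → [0,∞]` with `φ 0 = 0`. -/
structure IsYoungFunction (φ : ℝ≥0∞ → ℝ≥0∞) : Prop where
  nonconstant : ∃ x y, φ x ≠ φ y
  map_zero : φ 0 = 0
  mono : Monotone φ
  convex : ∀ ⦃a b x y : ℝ≥0∞⦄, a + b = 1 → φ (a * x + b * y) ≤ a * φ x + b * φ y
  left_continuous : ∀ x, ContinuousWithinAt φ (Set.Iio x) x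

/-- The Luxemburg norm `‖h‖_φ = inf {r > 0 | ∫ φ (r⁻¹ |h|) ≤ 1}` (`= ∞` if no such `r`),
for a nonnegative function `h`. -/
def luxNorm (φ : ℝ≥0∞ → ℝ≥0∞) (h : ES N → ℝ≥0∞) : ℝ≥0∞ :=
  sInf {r : ℝ≥0∞ | 0 < r ∧ ∫⁻ x, φ (r⁻¹ * h x) ≤ 1}

/-- The nonnegative part of an extended real, as an element of `[0,∞]`. -/
def toENN (a : EReal) : ℝ≥0∞ := if a = ⊤ then ⊤ else ENNReal.ofReal a.toReal

/-- The reciprocal `1/a ∈ [0,∞]` of an extended real (intended for `a ≥ 0`), with the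
conventions `1/0 = ∞` and `1/∞ = 0`. -/
def eInv (a : EReal) : ℝ≥0∞ := (toENN a)⁻¹

/-- The enclosing radius of a set `X ⊆ ℝ^N`: the infimum of the radii of closed balls
containing `X` (`0` for `X = ∅`, `∞` if `X` is unbounded). -/
def encRadius (X : Set (ES N)) : ℝ≥0∞ := sInf {r : ℝ≥0∞ | ∃ c : ES N, ∀ x ∈ X, edist x c ≤ r}

/-- The transform `f̂(x) = γ_f^+(|x|)` where `γ_f^+(t) = inf {ξ | ρ_f^+(ξ) ≤ t}` and
`ρ_f^+(ξ)` is the enclosing radius of the upper level set `{f > ξ}`. -/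
def hatE (f : ES N → EReal) (x : ES N) : EReal :=
  sInf {ξ : EReal | encRadius {y | ξ < f y} ≤ (‖x‖₊ : ℝ≥0∞)}

/-- The lower transform `f̌ = -((-f)^)`. -/
def checkE (f : ES N → EReal) (x : ES N) : EReal := - hatE (fun y => - f y) x

/-- The transform `f̂` for `[0,∞]`-valued functions. -/
def hatT (f : ES N → ℝ≥0∞) (x : ES N) : ℝ≥0∞ :=
  sInf {ξ : ℝ≥0∞ | encRadius {y | ξ < f y} ≤ (‖x‖₊ : ℝ≥0∞)}

/-- The lower transform `f̌(x) = γ_f^-(|x|)`, `γ_f^-(t) = sup {ξ | ρ({f < ξ}) ≤ t}`,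
for `[0,∞]`-valued functions. -/
def checkT (f : ES N → ℝ≥0∞) (x : ES N) : ℝ≥0∞ :=
  sSup {ξ : ℝ≥0∞ | encRadius {y | f y < ξ} ≤ (‖x‖₊ : ℝ≥0∞)}

/-- The `L^p` "norm" (`p ∈ [1,∞]`, essential supremum when `p = ∞`) of a `[0,∞]`-valued
function. -/
def pNorm (p : ℝ≥0∞) (h : ES N → ℝ≥0∞) : ℝ≥0∞ :=
  if p = ∞ then essSup h volume else (∫⁻ x, h x ^ p.toReal) ^ (1 / p.toReal)

/-!
`X + Y` is the image of `X ×ˢ Y` under addition, hence analytic, and analytic sets are universally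
measurable. To see the latter for a finite measure `μ` and a continuous `f : (ℕ → ℕ) → α`, restrict
the coordinates to compact sets `B 0, B 1, …` one after the other, each time keeping
`r < μ (f '' S)`, where `S` is the set of points still allowed. In the limit only the compact box
`univ.pi B` is left, and the measure of its image is still at least `r`: this image is the
intersection of the closures of the images of the boxes restricted in finitely many coordinates, so
continuity from above applies to these closures even though the images themselves need not be
measurable. Thus `range f` is inner regular for compact sets.
-/

section Pi

open scoped Topology

theorem exists_finset_pi_subset_of_isOpen {ι : Type*} {E : ι → Type*}
    [∀ i, TopologicalSpace (E i)] {K : ∀ i, Set (E i)} (hK : ∀ i, IsCompact (K i))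
    {U : Set (∀ i, E i)} (hU : IsOpen U) (hKU : univ.pi K ⊆ U) :
    ∃ I : Finset ι, (I : Set ι).pi K ⊆ U := by
  by_contra! h
  choose x hxK hxU using fun I ↦ not_subset.1 (h I)
  let l : Ultrafilter (Finset ι) := Ultrafilter.of atTop
  have hl : (l : Filter (Finset ι)) ≤ atTop := Ultrafilter.of_le atTop
  have coord_tendsto (i : ι) : ∃ y ∈ K i, Tendsto (fun I ↦ x I i) l (𝓝 y) := by
    refine (hK i).ultrafilter_le_nhds (l.map fun I ↦ x I i) (le_principal_iff.2 (hl ?_))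
    filter_upwards [eventually_ge_atTop {i}] with I hI
    exact hxK I i (hI (Finset.mem_singleton_self i))
  choose y hyK hxy using coord_tendsto
  have hyU : y ∈ U := hKU fun i _ ↦ hyK i
  obtain ⟨I, hI⟩ := ((tendsto_pi_nhds.2 hxy).eventually_mem (hU.mem_nhds hyU)).exists
  exact hxU I hI

theorem iInter_closure_image_pi_subset {ι α : Type*} {E : ι → Type*}
    [∀ i, TopologicalSpace (E i)] [TopologicalSpace α] [T2Space α] {f : (∀ i, E i) → α}
    (hf : Continuous f) {K : ∀ i, Set (E i)} (hK : ∀ i, IsCompact (K i)) :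
    ⋂ I : Finset ι, closure (f '' (I : Set ι).pi K) ⊆ f '' univ.pi K := by
  intro a ha
  by_contra ha_notMem
  obtain ⟨U, V, hU, hV, hKU, haV, hUV⟩ := SeparatedNhds.of_isCompact_isCompact
    ((isCompact_univ_pi hK).image hf) isCompact_singleton (disjoint_singleton_right.2 ha_notMem)
  obtain ⟨I, hI⟩ := exists_finset_pi_subset_of_isOpen hK (hU.preimage hf) (image_subset_iff.1 hKU)
  have hclosure : Disjoint (closure (f '' (I : Set ι).pi K)) V :=
    (hUV.mono_left (image_subset_iff.2 hI)).closure_left hV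
  exact disjoint_left.1 hclosure (mem_iInter.1 ha I) (singleton_subset_iff.1 haV)

theorem exists_forall_pi_Iio {E : ℕ → Type*} {p : Set (∀ k, E k) → Prop}
    {q : ∀ k, Set (E k) → Prop} (huniv : p univ)
    (hinter : ∀ k S, p S → ∃ B, q k B ∧ p (S ∩ Function.eval k ⁻¹' B)) :
    ∃ B : ∀ k, Set (E k), (∀ k, q k (B k)) ∧ ∀ k, p ((Iio k).pi B) := by
  choose! B hqB hpB using hinter
  let S : ℕ → Set (∀ k, E k) := Nat.rec univ fun k T ↦ T ∩ Function.eval k ⁻¹' B k T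
  have hpS (k : ℕ) : p (S k) := by
    induction k with
    | zero => exact huniv
    | succ k ih => exact hpB k (S k) ih
  have hS_eq (k : ℕ) : S k = (Iio k).pi fun i ↦ B i (S i) := by
    induction k with
    | zero => simp [S]
    | succ k ih =>
      rw [Iio_add_one_eq_Iic, ← Iio_insert, insert_pi, ← ih, inter_comm]
  exact ⟨fun k ↦ B k (S k), fun k ↦ hqB k (S k) (hpS k), fun k ↦ hS_eq k ▸ hpS k⟩

end Pi

section Measure

variable {α : Type*} [MeasurableSpace α] {μ : Measure α}

theorem nullMeasurableSet_of_forall_lt_exists_subset {s : Set α} (hs : μ s ≠ ∞)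
    (h : ∀ r < μ s, ∃ t ⊆ s, MeasurableSet t ∧ r < μ t) : NullMeasurableSet s μ := by
  obtain h_zero | h_pos := eq_zero_or_pos (μ s)
  · exact .of_null h_zero
  obtain ⟨r, -, hr, hr_tendsto⟩ := exists_seq_strictMono_tendsto' h_pos
  choose t hts ht hrt using fun k ↦ h (r k) (hr k).2
  have ht_iUnion : NullMeasurableSet (⋃ k, t k) μ := (MeasurableSet.iUnion ht).nullMeasurableSet
  have hs_le : μ s ≤ μ (⋃ k, t k) :=
    le_of_tendsto' hr_tendsto fun k ↦ (hrt k).le.trans (measure_mono (subset_iUnion t k))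
  exact ht_iUnion.congr (ae_eq_of_subset_of_measure_ge (iUnion_subset hts) hs_le ht_iUnion hs)

theorem exists_isCompact_lt_measure_image_inter_preimage {X E : Type*} [TopologicalSpace E]
    [SigmaCompactSpace E] {f : X → α} {g : X → E} {S : Set X} {r : ℝ≥0∞} (hr : r < μ (f '' S)) :
    ∃ B : Set E, IsCompact B ∧ r < μ (f '' (S ∩ g ⁻¹' B)) := by
  have hmono : Monotone fun m ↦ f '' (S ∩ g ⁻¹' compactCovering E m) := fun _ _ hab ↦
    image_mono (inter_subset_inter_right S (preimage_mono (compactCovering_subset E hab)))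
  have himage : f '' S = ⋃ m, f '' (S ∩ g ⁻¹' compactCovering E m) := by
    rw [← image_iUnion, ← inter_iUnion, ← preimage_iUnion, iUnion_compactCovering,
      preimage_univ, inter_univ]
  rw [himage, hmono.measure_iUnion] at hr
  obtain ⟨m, hm⟩ := lt_iSup_iff.1 hr
  exact ⟨compactCovering E m, isCompact_compactCovering E m, hm⟩

variable [TopologicalSpace α] [T2Space α] [OpensMeasurableSpace α]

theorem le_measure_image_univ_pi [IsFiniteMeasure μ] {ι : Type*} [Countable ι] {E : ι → Type*}
    [∀ i, TopologicalSpace (E i)] {f : (∀ i, E i) → α} (hf : Continuous f)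
    {K : ∀ i, Set (E i)} (hK : ∀ i, IsCompact (K i)) {r : ℝ≥0∞}
    (hr : ∀ I : Finset ι, r ≤ μ (f '' (I : Set ι).pi K)) : r ≤ μ (f '' univ.pi K) := by
  have hanti : Antitone fun I : Finset ι ↦ closure (f '' (I : Set ι).pi K) := fun _ _ hIJ ↦
    closure_mono (image_mono (pi_mono' (fun _ _ ↦ Subset.rfl) (Finset.coe_subset.2 hIJ)))
  calc
    r ≤ ⨅ I : Finset ι, μ (closure (f '' (I : Set ι).pi K)) :=
      le_iInf fun I ↦ (hr I).trans (measure_mono subset_closure)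
    _ = μ (⋂ I : Finset ι, closure (f '' (I : Set ι).pi K)) :=
      (hanti.measure_iInter (fun _ ↦ isClosed_closure.nullMeasurableSet)
        ⟨∅, measure_ne_top μ _⟩).symm
    _ ≤ μ (f '' univ.pi K) := measure_mono (iInter_closure_image_pi_subset hf hK)

theorem exists_isCompact_subset_range_lt_measure [IsFiniteMeasure μ] {E : ℕ → Type*}
    [∀ k, TopologicalSpace (E k)] [∀ k, SigmaCompactSpace (E k)] {f : (∀ k, E k) → α}
    (hf : Continuous f) {r : ℝ≥0∞} (hr : r < μ (range f)) :
    ∃ K ⊆ range f, IsCompact K ∧ r < μ K := by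
  obtain ⟨r', hrr', hr'⟩ := exists_between hr
  obtain ⟨B, hB, hr'B⟩ := exists_forall_pi_Iio (p := fun S ↦ r' < μ (f '' S))
    (q := fun _ ↦ IsCompact) (by rwa [image_univ])
    fun _ _ ↦ exists_isCompact_lt_measure_image_inter_preimage
  refine ⟨f '' univ.pi B, image_subset_range f _, (isCompact_univ_pi hB).image hf,
    hrr'.trans_le (le_measure_image_univ_pi hf hB fun I ↦ ?_)⟩
  obtain ⟨k, hIk⟩ := I.exists_nat_subset_range
  exact (hr'B k).le.trans (measure_mono (image_mono
    (pi_mono' (fun _ _ ↦ Subset.rfl) fun i hi ↦ Finset.mem_range.1 (hIk hi))))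

theorem innerRegularWRT_isCompact_analyticSet [IsFiniteMeasure μ] :
    μ.InnerRegularWRT IsCompact AnalyticSet := by
  intro s hs r hr
  rw [AnalyticSet] at hs
  obtain rfl | ⟨f, hf, rfl⟩ := hs
  · simp at hr
  · exact exists_isCompact_subset_range_lt_measure hf hr

theorem nullMeasurableSet_of_analyticSet [SFinite μ] {s : Set α} (hs : AnalyticSet s) :
    NullMeasurableSet s μ := by
  have h_finite : NullMeasurableSet s μ.toFinite :=
    nullMeasurableSet_of_forall_lt_exists_subset (measure_ne_top _ s) fun r hr ↦
      let ⟨K, hKs, hK, hrK⟩ := innerRegularWRT_isCompact_analyticSet hs r hr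
      ⟨K, hKs, hK.measurableSet, hrK⟩
  exact h_finite.mono_ac (absolutelyContinuous_toFinite μ)

end Measure

theorem nullMeasurableSet_image_of_measurable {X Y : Type*} [MeasurableSpace X]
    [StandardBorelSpace X] [MeasurableSpace Y] [StandardBorelSpace Y] {μ : Measure Y} [SFinite μ]
    {f : X → Y} (hf : Measurable f) {s : Set X} (hs : MeasurableSet s) :
    NullMeasurableSet (f '' s) μ := by
  let := upgradeStandardBorel Y
  exact nullMeasurableSet_of_analyticSet (hs.analyticSet_image hf)

theorem minkowski_sum_of_borel_null_measurable_general {G : Type*} [Add G] [MeasurableSpace G]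
    [StandardBorelSpace G] [MeasurableAdd₂ G] (μ : Measure G) [SFinite μ] {X Y : Set G}
    (hX : MeasurableSet X) (hY : MeasurableSet Y) : NullMeasurableSet (X + Y) μ := by
  rw [← add_image_prod]
  exact nullMeasurableSet_image_of_measurable measurable_add (hX.prod hY)

theorem minkowski_sum_of_borel_null_measurable {N : ℕ}
    (X Y : Set (ES N)) (hX : MeasurableSet X) (hY : MeasurableSet Y) :
    NullMeasurableSet (X + Y) (volume : Measure (ES N)) :=
  minkowski_sum_of_borel_null_measurable_general volume hX hY

end
end

section
/- If f, g : ℝ^N → (−∞, ∞] are Borel measurable, then the infimal convolution f□g : ℝ^N → [−∞, ∞] is Lebesgue measurable. -/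
/-!
A sublevel set `{f □ g < c}` is the projection of the Borel set `{(x, y) | f (x - y) + g y < c}`,
hence analytic. Analytic sets are measurable for the completion of every s-finite measure, by
Choquet's capacitability argument: an analytic set is a continuous image `F (ℕ → ℕ)`, and bounding
the coordinates of `ℕ → ℕ` one after the other, each time losing little outer measure, leaves a
compact box `Iic m` whose image has almost full measure. Outer regularity is what allows passing to
the limit in this decreasing construction, since the images of the partial boxes need not be
measurable.
-/

open MeasureTheory Filter Set
open scoped ENNReal NNReal Pointwise

noncomputable section

variable {N : ℕ}

theorem isCompact_Iic_of_orderBot {α : Type*} [Preorder α] [OrderBot α] [TopologicalSpace α]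
    [CompactIccSpace α] (a : α) : IsCompact (Iic a) :=
  Icc_bot (a := a) ▸ isCompact_Icc

section AnalyticSet

variable {α : Type*} [MeasurableSpace α] {μ : Measure α}

/-- The sequences of natural numbers whose first `k` terms are bounded by those of `m`: the partial
boxes, decreasing in `k` to the compact box `Iic m`. -/
def initialBox (m : ℕ → ℕ) (k : ℕ) : Set (ℕ → ℕ) := {x | ∀ i < k, x i ≤ m i}

theorem exists_initialBox_subset_of_isOpen {m : ℕ → ℕ} {V : Set (ℕ → ℕ)} (hV : IsOpen V)
    (hmV : Iic m ⊆ V) : ∃ k, initialBox m k ⊆ V := by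
  let : MetricSpace (ℕ → ℕ) := PiNat.metricSpaceNatNat
  obtain ⟨δ, hδ, hδV⟩ := (isCompact_Iic_of_orderBot m).exists_thickening_subset_open hV hmV
  obtain ⟨k, hk⟩ := exists_pow_lt_of_lt_one hδ one_half_lt_one
  refine ⟨k, fun x hx => hδV (Metric.mem_thickening_iff.2 ⟨x ⊓ m, mem_Iic.2 inf_le_right, ?_⟩)⟩
  have hcyl : x ∈ PiNat.cylinder (x ⊓ m) k := fun i hi => (inf_eq_left.2 (hx i hi)).symm
  exact (PiNat.mem_cylinder_iff_dist_le.1 hcyl).trans_lt hk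

theorem exists_lt_measure_image_inter_le {ι : Type*} (F : ι → α) (u : ι → ℕ) {S : Set ι}
    {c : ℝ≥0∞} (hc : c < μ (F '' S)) : ∃ n, c < μ (F '' (S ∩ {x | u x ≤ n})) := by
  have hmono : Monotone fun n => F '' (S ∩ {x | u x ≤ n}) := fun a b hab =>
    image_mono (inter_subset_inter_right S fun x (hx : u x ≤ a) => hx.trans hab)
  have hunion : ⋃ n, F '' (S ∩ {x | u x ≤ n}) = F '' S := by
    rw [← image_iUnion, ← inter_iUnion, iUnion_eq_univ_iff.2 fun x => ⟨u x, le_refl (u x)⟩,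
      inter_univ]
  rwa [← hunion, hmono.measure_iUnion, lt_iSup_iff] at hc

theorem exists_forall_lt_measure_image_initialBox (F : (ℕ → ℕ) → α) {c : ℝ≥0∞}
    (hc : c < μ (range F)) : ∃ m, ∀ k, c < μ (F '' initialBox m k) := by
  choose! bound hbound using fun S k (hS : c < μ (F '' S)) =>
    exists_lt_measure_image_inter_le F (Function.eval k) hS
  let S : ℕ → Set (ℕ → ℕ) := fun k =>
    Nat.rec univ (fun k T => T ∩ {x | x k ≤ bound T k}) k
  have hS_measure (k : ℕ) : c < μ (F '' S k) := by
    induction k with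
    | zero => rwa [← image_univ] at hc
    | succ k ih => exact hbound (S k) k ih
  have hS_subset (k : ℕ) : S k ⊆ initialBox (fun i => bound (S i) i) k := by
    induction k with
    | zero => exact fun x _ i hi => absurd hi i.not_lt_zero
    | succ k ih =>
      rintro x ⟨hx, hxk⟩ i hi
      rcases Nat.lt_succ_iff_lt_or_eq.1 hi with hi | rfl
      exacts [ih hx i hi, hxk]
  exact ⟨_, fun k => (hS_measure k).trans_le (measure_mono (image_mono (hS_subset k)))⟩

theorem innerRegularWRT_isCompact_analyticSet_s2 [TopologicalSpace α] [μ.OuterRegular] :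
    μ.InnerRegularWRT IsCompact AnalyticSet := by
  intro A hA r hr
  rw [AnalyticSet] at hA
  obtain rfl | ⟨F, hF, rfl⟩ := hA
  · simp only [measure_empty, not_lt_zero] at hr
  obtain ⟨c, hrc, hc⟩ := exists_between hr
  obtain ⟨m, hm⟩ := exists_forall_lt_measure_image_initialBox F hc
  refine ⟨F '' Iic m, image_subset_range F _, (isCompact_Iic_of_orderBot m).image hF,
    hrc.trans_le ?_⟩
  rw [(F '' Iic m).measure_eq_iInf_isOpen μ]
  refine le_iInf₂ fun U hU => le_iInf fun hUo => ?_
  obtain ⟨k, hk⟩ := exists_initialBox_subset_of_isOpen (hUo.preimage hF) (image_subset_iff.1 hU)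
  exact (hm k).le.trans (measure_mono (image_subset_iff.2 hk))

theorem nullMeasurableSet_of_forall_lt_measure {A : Set α} (hA : μ A ≠ ∞)
    (h : ∀ r < μ A, ∃ K ⊆ A, NullMeasurableSet K μ ∧ r < μ K) : NullMeasurableSet A μ := by
  rcases eq_zero_or_pos (μ A) with hzero | hpos
  · exact .of_null hzero
  obtain ⟨r, -, hr, hlim⟩ := exists_seq_strictMono_tendsto' hpos
  choose K hKA hK hrK using fun n => h (r n) (hr n).2
  have hunion : NullMeasurableSet (⋃ n, K n) μ := .iUnion hK
  have hle : μ A ≤ μ (⋃ n, K n) :=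
    le_of_tendsto' hlim fun n => (hrK n).le.trans (measure_mono (subset_iUnion K n))
  exact hunion.congr (ae_eq_of_subset_of_measure_ge (iUnion_subset hKA) hle hunion hA)

theorem nullMeasurableSet_of_analyticSet_s2 [TopologicalSpace α] [TopologicalSpace.MetrizableSpace α]
    [BorelSpace α] {A : Set α} (hA : AnalyticSet A) (μ : Measure α) [SFinite μ] :
    NullMeasurableSet A μ := by
  have hfinite : NullMeasurableSet A μ.toFinite :=
    nullMeasurableSet_of_forall_lt_measure (measure_ne_top _ A) fun r hr =>
      let ⟨K, hKA, hK, hrK⟩ := innerRegularWRT_isCompact_analyticSet_s2 hA r hr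
      ⟨K, hKA, hK.measurableSet.nullMeasurableSet, hrK⟩
  exact hfinite.mono_ac (absolutelyContinuous_toFinite μ)

end AnalyticSet

section Projection

variable {α β δ : Type*} [MeasurableSpace α] [MeasurableSpace β]

theorem nullMeasurableSet_image [StandardBorelSpace α] [MeasurableSpace.CountablyGenerated β]
    [MeasurableSpace.SeparatesPoints β] {s : Set α} {f : α → β} (hs : MeasurableSet s)
    (hf : Measurable f) (μ : Measure β) [SFinite μ] : NullMeasurableSet (f '' s) μ := by
  obtain ⟨_, _, _, _⟩ := exists_borelSpace_of_countablyGenerated_of_separatesPoints β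
  exact nullMeasurableSet_of_analyticSet_s2 (hs.analyticSet_image hf) μ

variable [CompleteLinearOrder δ] [TopologicalSpace δ] [OrderTopology δ]
  [SecondCountableTopology δ] [MeasurableSpace δ] [BorelSpace δ]

theorem aemeasurable_iInf_of_uncurry [StandardBorelSpace α] [StandardBorelSpace β]
    {F : α → β → δ} (hF : Measurable F.uncurry) (μ : Measure α) [SFinite μ] :
    AEMeasurable (fun x => ⨅ y, F x y) μ := by
  have hsublevel (c : δ) : NullMeasurableSet ((fun x => ⨅ y, F x y) ⁻¹' Iio c) μ := by
    have hproj : (fun x => ⨅ y, F x y) ⁻¹' Iio c = Prod.fst '' (F.uncurry ⁻¹' Iio c) := by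
      ext x
      simp [iInf_lt_iff]
    rw [hproj]
    exact nullMeasurableSet_image (measurableSet_Iio.preimage hF) measurable_fst μ
  exact NullMeasurable.aemeasurable
    (measurable_of_Iio (δ := NullMeasurableSpace α μ) hsublevel)

theorem infConvE_lebesgue_measurable_general {G : Type*} [Sub G] [MeasurableSpace G]
    [StandardBorelSpace G] [MeasurableSub₂ G] [Add δ] [MeasurableAdd₂ δ] (μ : Measure G)
    [SFinite μ] {f g : G → δ} (hf : Measurable f) (hg : Measurable g) :
    AEMeasurable (fun x => ⨅ y, (f (x - y) + g y)) μ :=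
  aemeasurable_iInf_of_uncurry
    ((hf.comp (measurable_fst.sub measurable_snd)).add (hg.comp measurable_snd)) μ

end Projection

theorem infConvE_lebesgue_measurable {N : ℕ}
    (f g : ES N → EReal) (hf : Measurable f) (hg : Measurable g)
    (hf' : ∀ x, f x ≠ ⊥) (hg' : ∀ x, g x ≠ ⊥) :
    AEMeasurable (infConvE f g) (volume : Measure (ES N)) :=
  infConvE_lebesgue_measurable_general volume hf hg

end
end

section
/- If f, g : ℝ^N → [0, ∞] are Lebesgue measurable with sup f = sup g (possibly ∞), and if f⊼g is Lebesgue measurable, then ∫_{ℝ^N} f dμ_N + ∫_{ℝ^N} g dμ_N ≤ ∫_{ℝ^N} (f⊼g) dμ_N. -/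
open MeasureTheory Filter Set
open scoped ENNReal NNReal Pointwise

noncomputable section

variable {N : ℕ}

/-!
The superlevel sets of `f ⊼ g` are the Minkowski sums of those of `f` and `g`, so by the layer
cake formula it suffices that a Haar measure `μ` satisfies `μ A + μ B ≤ μ (A + B)` for nonempty `A`
and `B`. For compact sets, choose a nonzero linear functional `φ`, let `a` maximize it on `A` and
`b` minimize it on `B`: the translates `b + A` and `a + B` both lie in `A + B` and overlap only
inside a hyperplane. Equality of the suprema makes the superlevel sets of `f` and `g` nonempty at
the same levels.

Since `∫⁻` is a lower integral, `f` and `g` may be replaced by smaller functions with the same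
integrals and suprema whose superlevel sets are σ-compact. Minkowski sums of σ-compact sets are
σ-compact, so for these functions `f ⊼ g` is measurable.
-/

section LayerCake

variable {α : Type*} [MeasurableSpace α] {μ : Measure α}

theorem volume_restrict_Ioi_setOf_ofReal_lt (a : ℝ≥0∞) :
    volume.restrict (Ioi (0 : ℝ)) {t | ENNReal.ofReal t < a} = a := by
  rw [Measure.restrict_apply (measurableSet_lt (by fun_prop) (by fun_prop))]
  induction a with
  | top => simp
  | coe a =>
    have hIoo : {t : ℝ | ENNReal.ofReal t < a} ∩ Ioi 0 = Ioo 0 (a : ℝ) := by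
      ext t
      simp only [mem_inter_iff, mem_ofPred_eq, mem_Ioi, mem_Ioo]
      rw [and_comm]
      refine and_congr_right fun ht => ?_
      rw [ENNReal.ofReal_lt_iff_lt_toReal ht.le ENNReal.coe_ne_top, ENNReal.coe_toReal]
    simp [hIoo]

theorem lintegral_eq_lintegral_measure_setOf_ofReal_lt [SFinite μ] {f : α → ℝ≥0∞}
    (hf : AEMeasurable f μ) :
    ∫⁻ x, f x ∂μ = ∫⁻ t in Ioi (0 : ℝ), μ {x | ENNReal.ofReal t < f x} := by
  wlog hm : Measurable f generalizing f
  · rw [lintegral_congr_ae hf.ae_eq_mk, this hf.measurable_mk.aemeasurable hf.measurable_mk]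
    refine lintegral_congr fun t => measure_congr ?_
    filter_upwards [hf.ae_eq_mk] with x hx
    exact congrArg (ENNReal.ofReal t < ·) hx.symm
  have hs : MeasurableSet {p : α × ℝ | ENNReal.ofReal p.2 < f p.1} :=
    measurableSet_lt (by fun_prop) (by fun_prop)
  calc ∫⁻ x, f x ∂μ
      = ∫⁻ x, volume.restrict (Ioi (0 : ℝ)) {t | ENNReal.ofReal t < f x} ∂μ :=
        lintegral_congr fun x => (volume_restrict_Ioi_setOf_ofReal_lt (f x)).symm
    _ = (μ.prod (volume.restrict (Ioi (0 : ℝ)))) {p | ENNReal.ofReal p.2 < f p.1} :=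
        (Measure.prod_apply hs).symm
    _ = ∫⁻ t in Ioi (0 : ℝ), μ {x | ENNReal.ofReal t < f x} := Measure.prod_apply_symm hs

theorem antitone_measure_setOf_ofReal_lt (μ : Measure α) (f : α → ℝ≥0∞) :
    Antitone fun t : ℝ => μ {x | ENNReal.ofReal t < f x} :=
  fun _ _ hst => measure_mono fun _ hx => (ENNReal.ofReal_le_ofReal hst).trans_lt hx

end LayerCake

theorem setOf_lt_iSup_indicator {ι Y : Type*} (u : ι → ℝ≥0∞) (A : ι → Set Y) (t : ℝ≥0∞) :
    {x | t < ⨆ i, (A i).indicator (fun _ => u i) x} = ⋃ i ∈ {i | t < u i}, A i := by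
  ext x
  simp only [mem_ofPred_eq, lt_iSup_iff, mem_iUnion, exists_prop]
  refine exists_congr fun i => ?_
  by_cases hx : x ∈ A i <;> simp [hx]

section SigmaCompact

variable {X : Type*} [TopologicalSpace X]

theorem isSigmaCompact_insert (a : X) {A : Set X} (hA : IsSigmaCompact A) :
    IsSigmaCompact (insert a A) := by
  obtain ⟨K, hK, rfl⟩ := hA
  rw [insert_eq, union_iUnion]
  exact isSigmaCompact_iUnion_of_isCompact _ fun n => isCompact_singleton.union (hK n)

theorem isSigmaCompact_add [Add X] [ContinuousAdd X] {A B : Set X} (hA : IsSigmaCompact A)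
    (hB : IsSigmaCompact B) : IsSigmaCompact (A + B) := by
  obtain ⟨K, hK, rfl⟩ := hA
  obtain ⟨L, hL, rfl⟩ := hB
  simp only [iUnion_add, add_iUnion]
  exact isSigmaCompact_iUnion _ fun m =>
    isSigmaCompact_iUnion_of_isCompact _ fun n => (hK n).add (hL m)

theorem measurableSet_of_isSigmaCompact [T2Space X] [MeasurableSpace X] [OpensMeasurableSpace X]
    {A : Set X} (hA : IsSigmaCompact A) : MeasurableSet A := by
  obtain ⟨K, hK, rfl⟩ := hA
  exact .iUnion fun n => (hK n).measurableSet

theorem measurable_of_isSigmaCompact_setOf_lt [T2Space X] [MeasurableSpace X]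
    [OpensMeasurableSpace X] {f : X → ℝ≥0∞} (hf : ∀ t, IsSigmaCompact {x | t < f x}) :
    Measurable f :=
  measurable_of_Ioi fun t => measurableSet_of_isSigmaCompact (hf t)

variable [T2Space X] [MeasurableSpace X] [OpensMeasurableSpace X] {μ : Measure X}
  [μ.InnerRegularCompactLTTop]

theorem exists_isSigmaCompact_measure_sdiff_eq_zero_of_ne_top {A : Set X} (hA : MeasurableSet A)
    (hμA : μ A ≠ ∞) : ∃ K ⊆ A, IsSigmaCompact K ∧ μ (A \ K) = 0 := by
  have hcompact (n : ℕ) : ∃ K ⊆ A, IsCompact K ∧ μ (A \ K) < (n : ℝ≥0∞)⁻¹ :=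
    hA.exists_isCompact_sdiff_lt hμA (by simp)
  choose K hKA hK hμK using hcompact
  refine ⟨⋃ n, K n, iUnion_subset hKA, isSigmaCompact_iUnion_of_isCompact K hK, ?_⟩
  refine le_antisymm (ge_of_tendsto' ENNReal.tendsto_inv_nat_nhds_zero fun n => ?_) zero_le
  exact (measure_mono (sdiff_subset_sdiff_right (subset_iUnion K n))).trans (hμK n).le

theorem exists_isSigmaCompact_measure_sdiff_eq_zero [SigmaFinite μ] {A : Set X}
    (hA : MeasurableSet A) : ∃ K ⊆ A, IsSigmaCompact K ∧ μ (A \ K) = 0 := by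
  have hpiece (n : ℕ) : ∃ K ⊆ A ∩ spanningSets μ n,
      IsSigmaCompact K ∧ μ ((A ∩ spanningSets μ n) \ K) = 0 :=
    exists_isSigmaCompact_measure_sdiff_eq_zero_of_ne_top
      (hA.inter (measurableSet_spanningSets μ n))
      (measure_inter_lt_top_of_right_ne_top (measure_spanningSets_lt_top μ n).ne).ne
  choose K hKA hK hμK using hpiece
  refine ⟨⋃ n, K n, iUnion_subset fun n => (hKA n).trans inter_subset_left,
    isSigmaCompact_iUnion K hK, measure_mono_null ?_ (measure_iUnion_null hμK)⟩
  calc A \ ⋃ n, K n = ⋃ n, (A ∩ spanningSets μ n) \ ⋃ m, K m := by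
        rw [← iUnion_sdiff, ← inter_iUnion, iUnion_spanningSets, inter_univ]
    _ ⊆ ⋃ n, (A ∩ spanningSets μ n) \ K n :=
        iUnion_mono fun n => sdiff_subset_sdiff_right (subset_iUnion K n)

theorem exists_isSigmaCompact_subset_of_subset [SigmaFinite μ] {A B : Set X}
    (hB : MeasurableSet B) (hBA : B ⊆ A) :
    ∃ K ⊆ A, IsSigmaCompact K ∧ μ (B \ K) = 0 ∧ (A.Nonempty → K.Nonempty) := by
  obtain ⟨K, hKB, hK, hμK⟩ := exists_isSigmaCompact_measure_sdiff_eq_zero (μ := μ) hB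
  rcases A.eq_empty_or_nonempty with rfl | ⟨a, ha⟩
  · exact ⟨K, hKB.trans hBA, hK, hμK, fun h => absurd h not_nonempty_empty⟩
  · exact ⟨insert a K, insert_subset ha (hKB.trans hBA), isSigmaCompact_insert a hK,
      measure_mono_null (sdiff_subset_sdiff_right (subset_insert a K)) hμK,
      fun _ => insert_nonempty a K⟩

variable (μ) in
theorem exists_le_isSigmaCompact_setOf_lt [SigmaFinite μ] (f : X → ℝ≥0∞) :
    ∃ f' ≤ f, (∀ t, IsSigmaCompact {x | t < f' x}) ∧
      ⨆ x, f' x = ⨆ x, f x ∧ ∫⁻ x, f' x ∂μ = ∫⁻ x, f x ∂μ := by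
  obtain ⟨f₀, hf₀, hf₀f, hint⟩ := exists_measurable_le_lintegral_eq μ f
  let u : ℕ → ℝ≥0∞ := TopologicalSpace.denseSeq ℝ≥0∞
  have hu {s t : ℝ≥0∞} (hst : s < t) : ∃ n, s < u n ∧ u n < t := by
    obtain ⟨_, ⟨n, rfl⟩, hn⟩ := (TopologicalSpace.denseRange_denseSeq ℝ≥0∞).exists_between hst
    exact ⟨n, hn⟩
  have hlevel (n : ℕ) : ∃ K ⊆ {x | u n < f x}, IsSigmaCompact K ∧
      μ ({x | u n < f₀ x} \ K) = 0 ∧ ({x | u n < f x}.Nonempty → K.Nonempty) :=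
    exists_isSigmaCompact_subset_of_subset (measurableSet_lt measurable_const hf₀)
      fun x hx => hx.trans_le (hf₀f x)
  choose K hKf hK hμK hKne using hlevel
  let f' : X → ℝ≥0∞ := fun x => ⨆ n, (K n).indicator (fun _ => u n) x
  have hf'f : f' ≤ f := fun x => iSup_le fun n =>
    indicator_apply_le' (fun hx => (hKf n hx).le) fun _ => zero_le
  have hle {n : ℕ} {x : X} (hx : x ∈ K n) : u n ≤ f' x := by
    simpa only [indicator_of_mem hx] using le_iSup (fun m => (K m).indicator (fun _ => u m) x) n
  have hf₀f' : f₀ ≤ᵐ[μ] f' := by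
    filter_upwards [ae_all_iff.2 fun n => measure_eq_zero_iff_ae_notMem.1 (hμK n)] with x hx
    refine le_of_forall_lt fun t ht => ?_
    obtain ⟨n, htn, hnx⟩ := hu ht
    exact htn.trans_le (hle (by_contra fun hxK => hx n ⟨hnx, hxK⟩))
  refine ⟨f', hf'f, fun t => ?_, le_antisymm (iSup_mono hf'f) ?_,
    le_antisymm (lintegral_mono hf'f) (hint.trans_le (lintegral_mono_ae hf₀f'))⟩
  · rw [setOf_lt_iSup_indicator]
    exact isSigmaCompact_biUnion (to_countable _) fun n _ => hK n
  · refine le_of_forall_lt fun t ht => ?_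
    obtain ⟨n, htn, hn⟩ := hu ht
    obtain ⟨x, hx⟩ := hKne n (lt_iSup_iff.1 hn)
    exact htn.trans_le ((hle hx).trans (le_iSup f' x))

end SigmaCompact

theorem measure_eq_iSup_isCompact_nonempty {X : Type*} [TopologicalSpace X] [MeasurableSpace X]
    {μ : Measure X} [μ.InnerRegular] {A : Set X} (hA : NullMeasurableSet A μ) (hne : A.Nonempty) :
    μ A = ⨆ (K : Set X) (_ : K ⊆ A ∧ IsCompact K ∧ K.Nonempty), μ K := by
  refine le_antisymm ?_ (iSup₂_le fun K hK => measure_mono hK.1)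
  obtain ⟨a, ha⟩ := hne
  obtain ⟨A', hA'A, hA', hae⟩ := hA.exists_measurable_subset_ae_eq
  rw [← measure_congr hae, hA'.measure_eq_iSup_isCompact]
  refine iSup₂_le fun K hKA' => iSup_le fun hK => ?_
  exact (measure_mono (subset_insert a K)).trans <| le_iSup₂_of_le (insert a K)
    ⟨insert_subset ha (hKA'.trans hA'A), hK.insert a, insert_nonempty a K⟩ le_rfl

section MinkowskiSum

variable {E : Type*} [NormedAddCommGroup E] [NormedSpace ℝ E] [FiniteDimensional ℝ E]
  [MeasurableSpace E] [BorelSpace E] (μ : Measure E) [μ.IsAddHaarMeasure]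

theorem addHaar_setOf_apply_eq {φ : E →ₗ[ℝ] ℝ} (hφ : φ ≠ 0) (c : ℝ) : μ {x | φ x = c} = 0 := by
  rcases eq_empty_or_nonempty {x | φ x = c} with hempty | ⟨x₀, rfl⟩
  · rw [hempty, measure_empty]
  · have hfiber : {x | φ x = φ x₀} = x₀ +ᵥ (LinearMap.ker φ : Set E) := by
      ext x
      simp [mem_vadd_set_iff_neg_vadd_mem, sub_eq_zero, neg_add_eq_sub]
    rw [hfiber, measure_vadd]
    exact Measure.addHaar_submodule μ _ (mt LinearMap.ker_eq_top.1 hφ)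

variable [Nontrivial E]

theorem addHaar_add_le_addHaar_add_of_isCompact {A B : Set E} (hA : IsCompact A) (hB : IsCompact B)
    (hA' : A.Nonempty) (hB' : B.Nonempty) : μ A + μ B ≤ μ (A + B) := by
  obtain ⟨φ, hφ⟩ := exists_ne (0 : StrongDual ℝ E)
  obtain ⟨a, haA, ha⟩ := hA.exists_isMaxOn hA' φ.continuous.continuousOn
  obtain ⟨b, hbB, hb⟩ := hB.exists_isMinOn hB' φ.continuous.continuousOn
  have hdisj : AEDisjoint μ (b +ᵥ A) (a +ᵥ B) := by
    refine measure_mono_null ?_ (addHaar_setOf_apply_eq μ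
      (ContinuousLinearMap.coe_injective.ne hφ) (φ a + φ b))
    rintro _ ⟨⟨x, hx, rfl⟩, ⟨y, hy, hxy⟩⟩
    have hxa : φ x ≤ φ a := ha hx
    have hby : φ b ≤ φ y := hb hy
    have hφxy : φ a + φ y = φ b + φ x := by simpa using congrArg φ hxy
    change φ (b + x) = φ a + φ b
    rw [map_add]
    linarith
  calc μ A + μ B = μ (b +ᵥ A) + μ (a +ᵥ B) := by rw [measure_vadd, measure_vadd]
    _ = μ ((b +ᵥ A) ∪ (a +ᵥ B)) :=
        (measure_union₀ (hB.vadd a).measurableSet.nullMeasurableSet hdisj).symm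
    _ ≤ μ (A + B) := measure_mono <| union_subset
        (add_comm A B ▸ vadd_set_subset_vadd hbB) (vadd_set_subset_vadd haA)

theorem addHaar_add_le_addHaar_add {A B : Set E} (hA : NullMeasurableSet A μ)
    (hB : NullMeasurableSet B μ) (hA' : A.Nonempty) (hB' : B.Nonempty) :
    μ A + μ B ≤ μ (A + B) := by
  rw [measure_eq_iSup_isCompact_nonempty hA hA', measure_eq_iSup_isCompact_nonempty hB hB']
  have hsingleton {C : Set E} (hC : C.Nonempty) : ∃ K, K ⊆ C ∧ IsCompact K ∧ K.Nonempty :=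
    hC.imp' singleton fun c hc => ⟨singleton_subset_iff.2 hc, isCompact_singleton,
      singleton_nonempty c⟩
  refine ENNReal.biSup_add_biSup_le' (hsingleton hA') (hsingleton hB') ?_
  rintro K ⟨hKA, hK, hK'⟩ L ⟨hLB, hL, hL'⟩
  exact (addHaar_add_le_addHaar_add_of_isCompact μ hK hL hK' hL').trans
    (measure_mono (add_subset_add hKA hLB))

end MinkowskiSum

section SupMinConvolution

/-- The operation `(f ⊼ g)(x) = sup_y min (f (x - y)) (g y)` on an arbitrary additive group, with
values in an arbitrary complete linear order. On `ES N` and for values in `[0,∞]` it is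
`supMin f g`. -/
def supMinConvolution {G β : Type*} [AddGroup G] [CompleteLinearOrder β] (f g : G → β)
    (x : G) : β :=
  ⨆ y, min (f (x - y)) (g y)

theorem supMinConvolution_mono {G β : Type*} [AddGroup G] [CompleteLinearOrder β]
    {f f' g g' : G → β} (hf : f' ≤ f) (hg : g' ≤ g) :
    supMinConvolution f' g' ≤ supMinConvolution f g :=
  fun x => iSup_mono fun y => min_le_min (hf (x - y)) (hg y)

theorem setOf_lt_supMinConvolution {G β : Type*} [AddGroup G] [CompleteLinearOrder β]
    (f g : G → β) (t : β) :
    {x | t < supMinConvolution f g x} = {x | t < f x} + {x | t < g x} := by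
  ext x
  simp only [supMinConvolution, mem_ofPred_eq, lt_iSup_iff, lt_min_iff, Set.mem_add]
  constructor
  · rintro ⟨y, hf, hg⟩
    exact ⟨x - y, hf, y, hg, sub_add_cancel x y⟩
  · rintro ⟨z, hf, y, hg, rfl⟩
    exact ⟨y, by rwa [add_sub_cancel_right], hg⟩

variable {E : Type*} [NormedAddCommGroup E] [NormedSpace ℝ E] [FiniteDimensional ℝ E]
  [Nontrivial E] [MeasurableSpace E] [BorelSpace E] (μ : Measure E) [μ.IsAddHaarMeasure]

theorem addHaar_setOf_lt_add_le_supMinConvolution {f g : E → ℝ≥0∞} (hf : AEMeasurable f μ)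
    (hg : AEMeasurable g μ) (hsup : ⨆ x, f x = ⨆ x, g x) (t : ℝ≥0∞) :
    μ {x | t < f x} + μ {x | t < g x} ≤ μ {x | t < supMinConvolution f g x} := by
  have hnonempty : {x | t < f x}.Nonempty ↔ {x | t < g x}.Nonempty := by
    rw [Set.Nonempty, Set.Nonempty]
    simp only [mem_ofPred_eq, ← lt_iSup_iff, hsup]
  rcases eq_empty_or_nonempty {x | t < g x} with hg₀ | hg₀
  · have hf₀ : {x | t < f x} = ∅ := by
      rwa [← not_nonempty_iff_eq_empty, hnonempty, not_nonempty_iff_eq_empty]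
    simp [hf₀, hg₀]
  · rw [setOf_lt_supMinConvolution]
    exact addHaar_add_le_addHaar_add μ (nullMeasurableSet_lt aemeasurable_const hf)
      (nullMeasurableSet_lt aemeasurable_const hg) (hnonempty.2 hg₀) hg₀

theorem lintegral_add_le_lintegral_supMinConvolution_of_aemeasurable {f g : E → ℝ≥0∞}
    (hf : AEMeasurable f μ) (hg : AEMeasurable g μ) (hsup : ⨆ x, f x = ⨆ x, g x)
    (hfg : AEMeasurable (supMinConvolution f g) μ) :
    ∫⁻ x, f x ∂μ + ∫⁻ x, g x ∂μ ≤ ∫⁻ x, supMinConvolution f g x ∂μ := by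
  rw [lintegral_eq_lintegral_measure_setOf_ofReal_lt hf,
    lintegral_eq_lintegral_measure_setOf_ofReal_lt hg,
    lintegral_eq_lintegral_measure_setOf_ofReal_lt hfg,
    ← lintegral_add_left (antitone_measure_setOf_ofReal_lt μ f).measurable]
  exact lintegral_mono fun t => addHaar_setOf_lt_add_le_supMinConvolution μ hf hg hsup _

theorem lintegral_add_le_lintegral_supMin_general (f g : E → ℝ≥0∞)
    (hsup : ⨆ x, f x = ⨆ x, g x) :
    ∫⁻ x, f x ∂μ + ∫⁻ x, g x ∂μ ≤ ∫⁻ x, supMinConvolution f g x ∂μ := by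
  obtain ⟨f', hf'f, hf', hsupf, hintf⟩ := exists_le_isSigmaCompact_setOf_lt μ f
  obtain ⟨g', hg'g, hg', hsupg, hintg⟩ := exists_le_isSigmaCompact_setOf_lt μ g
  have hfg' (t : ℝ≥0∞) : IsSigmaCompact {x | t < supMinConvolution f' g' x} := by
    rw [setOf_lt_supMinConvolution]
    exact isSigmaCompact_add (hf' t) (hg' t)
  calc ∫⁻ x, f x ∂μ + ∫⁻ x, g x ∂μ = ∫⁻ x, f' x ∂μ + ∫⁻ x, g' x ∂μ := by rw [hintf, hintg]
    _ ≤ ∫⁻ x, supMinConvolution f' g' x ∂μ :=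
        lintegral_add_le_lintegral_supMinConvolution_of_aemeasurable μ
          (measurable_of_isSigmaCompact_setOf_lt hf').aemeasurable
          (measurable_of_isSigmaCompact_setOf_lt hg').aemeasurable
          (hsupf.trans (hsup.trans hsupg.symm))
          (measurable_of_isSigmaCompact_setOf_lt hfg').aemeasurable
    _ ≤ ∫⁻ x, supMinConvolution f g x ∂μ := lintegral_mono (supMinConvolution_mono hf'f hg'g)

end SupMinConvolution

theorem lintegral_add_le_lintegral_supMin {N : ℕ} (hN : 0 < N)
    (f g : ES N → ℝ≥0∞) (hf : AEMeasurable f (volume : Measure (ES N)))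
    (hg : AEMeasurable g (volume : Measure (ES N)))
    (hsup : (⨆ x, f x) = ⨆ x, g x)
    (hfg : AEMeasurable (supMin f g) (volume : Measure (ES N))) :
    (∫⁻ x, f x) + ∫⁻ x, g x ≤ ∫⁻ x, supMin f g x := by
  have : Nonempty (Fin N) := Fin.pos_iff_nonempty.1 hN
  exact lintegral_add_le_lintegral_supMin_general volume f g hsup

end
end

section
/- For every function f : ℝ^N → [−∞, ∞] and every ξ ∈ [−∞, ∞], the upper level set {x ∈ ℝ^N : f̂(x) > ξ} of the transform f̂ has Lebesgue measure equal to μ_N(B̄_{F_ξ^+}) = ω_N ρ_f^+(ξ)^N, the measure of the enclosing ball of the upper level set F_ξ^+ := {x : f(x) > ξ}. -/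
open MeasureTheory Filter Set
open scoped ENNReal NNReal Pointwise

noncomputable section

variable {N : ℕ}

/-! By compactness of closed balls, the enclosing radius of a set is determined by its finite
subsets. A finite subset of `{f > ξ}` already lies in `{f > ζ}` for every `ζ` below the least value
of `f` on it, so `ρ_f^+` inherits right continuity and the infimum defining `γ_f^+` is attained:
`γ_f^+(t) ≤ ξ ↔ ρ_f^+(ξ) ≤ t`. Hence `{f̂ > ξ}` is the open ball of radius `ρ_f^+(ξ)` about the
origin. -/

section ProperSpace

variable {E : Type*} [PseudoMetricSpace E] [ProperSpace E]

theorem exists_subset_closedBall_of_forall_finite {X : Set E} {r : ℝ}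
    (h : ∀ F ⊆ X, F.Finite → ∃ c, F ⊆ Metric.closedBall c r) :
    ∃ c, X ⊆ Metric.closedBall c r := by
  rcases X.eq_empty_or_nonempty with rfl | ⟨x₀, hx₀⟩
  · exact h ∅ subset_rfl finite_empty
  -- The centers of the balls of radius `r` containing `X` are the points of `⋂ x ∈ X, B̄(x, r)`.
  have hfinite (u : Finset X) :
      (Metric.closedBall x₀ r ∩ ⋂ x ∈ u, Metric.closedBall (x : E) r).Nonempty := by
    obtain ⟨c, hc⟩ := h (insert x₀ ((↑) '' (u : Set X)))
      (insert_subset hx₀ (Subtype.coe_image_subset X u)) ((u.finite_toSet.image _).insert x₀)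
    refine ⟨c, Metric.mem_closedBall_comm.1 (hc (mem_insert x₀ _)), mem_iInter₂.2 fun x hx => ?_⟩
    exact Metric.mem_closedBall_comm.1 (hc (mem_insert_of_mem x₀ (mem_image_of_mem _ hx)))
  obtain ⟨c, -, hc⟩ := (isCompact_closedBall x₀ r).inter_iInter_nonempty
    (fun x : X => Metric.closedBall (x : E) r) (fun _ => Metric.isClosed_closedBall) hfinite
  exact ⟨c, fun x hx => Metric.mem_closedBall_comm.1 (mem_iInter.1 hc ⟨x, hx⟩)⟩

end ProperSpace

section AddHaar

variable {E : Type*} [NormedAddCommGroup E] [NormedSpace ℝ E] [FiniteDimensional ℝ E]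
  [Nontrivial E] [MeasurableSpace E] [BorelSpace E]

theorem addHaar_eball (μ : Measure E) [μ.IsAddHaarMeasure] (x : E) (r : ℝ≥0∞) :
    μ (Metric.eball x r) = r ^ Module.finrank ℝ E * μ (Metric.ball 0 1) := by
  induction r with
  | top =>
    rw [Metric.eball_top, measure_univ_of_isAddLeftInvariant,
      ENNReal.top_pow Module.finrank_pos.ne',
      ENNReal.top_mul (Metric.measure_ball_pos μ 0 one_pos).ne']
  | coe r =>
    rw [Metric.eball_coe, μ.addHaar_ball x r.coe_nonneg, ENNReal.ofReal_pow r.coe_nonneg,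
      ENNReal.ofReal_coe_nnreal]

end AddHaar

section EncRadius

variable {X Y : Set (ES N)} {r : ℝ≥0∞}

theorem encRadius_le_of_subset_closedEBall {c : ES N} (h : X ⊆ Metric.closedEBall c r) :
    encRadius X ≤ r :=
  sInf_le ⟨c, h⟩

theorem exists_subset_closedEBall_of_encRadius_lt (h : encRadius X < r) :
    ∃ c, X ⊆ Metric.closedEBall c r := by
  obtain ⟨s, ⟨c, hc⟩, hsr⟩ := sInf_lt_iff.1 h
  exact ⟨c, fun x hx => (hc x hx).trans hsr.le⟩

theorem encRadius_mono (h : X ⊆ Y) : encRadius X ≤ encRadius Y :=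
  sInf_le_sInf fun _ ⟨c, hc⟩ => ⟨c, fun x hx => hc x (h hx)⟩

theorem encRadius_empty : encRadius (∅ : Set (ES N)) = 0 :=
  nonpos_iff_eq_zero.1 (encRadius_le_of_subset_closedEBall (empty_subset (Metric.closedEBall 0 0)))

theorem encRadius_le_of_forall_finite (h : ∀ F ⊆ X, F.Finite → encRadius F ≤ r) :
    encRadius X ≤ r := by
  refine le_of_forall_gt_imp_ge_of_dense fun s hrs => ?_
  induction s with
  | top => exact le_top
  | coe s =>
    obtain ⟨c, hc⟩ : ∃ c, X ⊆ Metric.closedBall c s :=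
      exists_subset_closedBall_of_forall_finite fun F hF hfin => by
        simpa only [Metric.closedEBall_coe] using
          exists_subset_closedEBall_of_encRadius_lt ((h F hF hfin).trans_lt hrs)
    rw [← Metric.closedEBall_coe] at hc
    exact encRadius_le_of_subset_closedEBall hc

end EncRadius

section UpperRadius

variable {α : Type*} [CompleteLinearOrder α]

/-- The enclosing radius `ρ_f^+(ξ)` of the upper level set `{f > ξ}`, for functions with values in
any complete linear order. -/
def upperRadius (f : ES N → α) (ξ : α) : ℝ≥0∞ := encRadius {y | ξ < f y}

/-- The generalized inverse `γ_f^+(t) = inf {ξ | ρ_f^+(ξ) ≤ t}` of `upperRadius f`, which is the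
radial profile of the transform of `f`. -/
def upperRadiusInv (f : ES N → α) (t : ℝ≥0∞) : α := sInf {ξ | upperRadius f ξ ≤ t}

theorem encRadius_le_of_finite_of_upperRadiusInv_le {f : ES N → α} {t : ℝ≥0∞} {ξ : α}
    (h : upperRadiusInv f t ≤ ξ) {F : Set (ES N)} (hF : F ⊆ {y | ξ < f y})
    (hfin : F.Finite) : encRadius F ≤ t := by
  rcases F.eq_empty_or_nonempty with rfl | hne
  · exact encRadius_empty.trans_le zero_le
  obtain ⟨y₀, hy₀, hmin⟩ := F.exists_min_image f hfin hne
  obtain ⟨ζ, hζt, hζ⟩ : ∃ ζ, upperRadius f ζ ≤ t ∧ ζ < f y₀ :=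
    sInf_lt_iff.1 (h.trans_lt (hF hy₀))
  have hFζ : F ⊆ {y | ζ < f y} := fun y hy => hζ.trans_le (hmin y hy)
  exact (encRadius_mono hFζ).trans hζt

theorem upperRadiusInv_le_iff {f : ES N → α} {t : ℝ≥0∞} {ξ : α} :
    upperRadiusInv f t ≤ ξ ↔ upperRadius f ξ ≤ t where
  mp h := encRadius_le_of_forall_finite fun _ => encRadius_le_of_finite_of_upperRadiusInv_le h
  mpr h := sInf_le h

end UpperRadius

theorem hatE_eq_upperRadiusInv (f : ES N → EReal) (x : ES N) :
    hatE f x = upperRadiusInv f ‖x‖ₑ :=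
  rfl

theorem setOf_lt_hatE (f : ES N → EReal) (ξ : EReal) :
    {x : ES N | ξ < hatE f x} = Metric.eball 0 (upperRadius f ξ) := by
  ext x
  rw [mem_ofPred_eq, hatE_eq_upperRadiusInv, ← not_le, upperRadiusInv_le_iff, not_le,
    Metric.mem_eball, edist_zero_right]

theorem volume_upperLevel_hatE {N : ℕ} (hN : 0 < N)
    (f : ES N → EReal) (ξ : EReal) :
    volume {x : ES N | ξ < hatE f x} =
      volume (Metric.ball (0 : ES N) 1) * encRadius {x : ES N | ξ < f x} ^ N := by
  have : NeZero N := ⟨hN.ne'⟩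
  rw [setOf_lt_hatE, addHaar_eball, finrank_euclideanSpace_fin, mul_comm, upperRadius]

end
end

section
/- If f : ℝ^N → [0, ∞] and the transform f̂ is identically 0, then either f is identically 0, or there exist x₀ ∈ ℝ^N and z ∈ (0, ∞] such that f(x₀) = z and f(x) = 0 for all x ≠ x₀. -/
open MeasureTheory Filter Set
open scoped ENNReal NNReal Pointwise

noncomputable section

variable {N : ℕ}

lemma ediam_le_two_mul_encRadius (X : Set (ES N)) : Metric.ediam X ≤ 2 * encRadius X := by
  refine Metric.ediam_le fun x hx y hy => ?_
  simp only [encRadius, sInf_eq_iInf, ENNReal.mul_iInf_of_ne two_ne_zero ENNReal.ofNat_ne_top]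
  refine le_iInf₂ fun r ⟨c, hc⟩ => ?_
  calc
    edist x y ≤ edist x c + edist y c := edist_triangle_right x y c
    _ ≤ r + r := add_le_add (hc x hx) (hc y hy)
    _ = 2 * r := (two_mul r).symm

lemma ediam_setOf_hatT_lt_le (f : ES N → ℝ≥0∞) (x : ES N) :
    Metric.ediam {y | hatT f x < f y} ≤ 2 * ‖x‖₊ := by
  refine Metric.ediam_le fun y hy z hz => ?_
  have hlt : hatT f x < min (f y) (f z) := lt_min hy hz
  obtain ⟨ξ, hξ, hξ_lt⟩ := sInf_lt_iff.1 hlt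
  obtain ⟨hξy, hξz⟩ := lt_min_iff.1 hξ_lt
  calc
    edist y z ≤ Metric.ediam {w | ξ < f w} := Metric.edist_le_ediam_of_mem hξy hξz
    _ ≤ 2 * encRadius {w | ξ < f w} := ediam_le_two_mul_encRadius _
    _ ≤ 2 * ‖x‖₊ := by gcongr; exact hξ

lemma subsingleton_setOf_hatT_zero_lt (f : ES N → ℝ≥0∞) :
    {y | hatT f 0 < f y}.Subsingleton :=
  Metric.ediam_eq_zero_iff.1 <| by simpa using ediam_setOf_hatT_lt_le f 0

theorem eq_zero_or_single_point_of_hatT_eq_zero {N : ℕ}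
    (f : ES N → ℝ≥0∞) (hf : ∀ x, hatT f x = 0) :
    (∀ x, f x = 0) ∨
      ∃ (x₀ : ES N) (z : ℝ≥0∞), 0 < z ∧ f x₀ = z ∧ ∀ x, x ≠ x₀ → f x = 0 := by
  have hsub : f.support.Subsingleton := by
    simpa only [Function.support, hf, pos_iff_ne_zero] using subsingleton_setOf_hatT_zero_lt f
  obtain hempty | ⟨x₀, hx₀⟩ := f.support.eq_empty_or_nonempty
  · exact Or.inl (congrFun (Function.support_eq_empty_iff.1 hempty))
  · refine Or.inr ⟨x₀, f x₀, pos_iff_ne_zero.2 hx₀, rfl, fun x hne => ?_⟩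
    exact Function.notMem_support.1 fun hx => hne (hsub hx hx₀)

end
end

section
/- For every f : ℝ^N → [0, ∞], the transform of the pointwise reciprocal equals the pointwise reciprocal of the lower transform: (f⁻¹)^ = (f̌)⁻¹ as functions on ℝ^N. -/
/-!
An order-reversing bijection exchanges strict upper and strict lower level sets, and exchanges
infima and suprema. The reciprocal is such a bijection of `[0, ∞]`, and `f̂`, `f̌` are an infimum
and a supremum over levels whose upper, respectively lower, level sets satisfy the same condition.
-/

open MeasureTheory Filter Set
open scoped ENNReal NNReal Pointwise

noncomputable section

variable {N : ℕ}

section OrderReversal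

open OrderDual

variable {α β γ : Type*}

theorem setOf_lt_ofDual_eq_setOf_lt_symm [Preorder β] [Preorder γ] (e : β ≃o γᵒᵈ)
    (f : α → β) (ξ : γ) :
    {y | ξ < ofDual (e (f y))} = {y | f y < e.symm (toDual ξ)} :=
  Set.ext fun _ => e.lt_symm_apply.symm

theorem hatT_inv_eq_inv_checkT_general [CompleteLattice β] [CompleteLattice γ] (e : β ≃o γᵒᵈ)
    (P : Set α → Prop) (f : α → β) :
    sInf {ξ : γ | P {y | ξ < ofDual (e (f y))}} = ofDual (e (sSup {ζ : β | P {y | f y < ζ}})) :=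
  calc
    sInf {ξ : γ | P {y | ξ < ofDual (e (f y))}}
    _ = sInf {ξ : γ | P {y | f y < e.symm (toDual ξ)}} := by
      simp only [setOf_lt_ofDual_eq_setOf_lt_symm]
    -- An infimum in `γ` is definitionally a supremum in `γᵒᵈ`.
    _ = ofDual (sSup (e.symm ⁻¹' {ζ : β | P {y | f y < ζ}})) := rfl
    _ = ofDual (e (sSup {ζ : β | P {y | f y < ζ}})) := by
      rw [e.map_sSup_eq_sSup_symm_preimage]

end OrderReversal

theorem hatT_inv_eq_inv_checkT {N : ℕ} (f : ES N → ℝ≥0∞) :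
    hatT (fun y => (f y)⁻¹) = fun x => (checkT f x)⁻¹ :=
  funext fun x =>
    hatT_inv_eq_inv_checkT_general OrderIso.invENNReal (encRadius · ≤ (‖x‖₊ : ℝ≥0∞)) f

end
end
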